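/- 1-bit MinHash bounds for cosine similarity: let W1, W2 be nonempty finite sets with cosine similarity S and resemblance R, and set the 1-bit collision value P = (R + 1)/2. Then (S² + 1)/2 ≤ P ≤ 1/(2 − S). Consequently, for S0 ∈ (0,1] and c ∈ (0,1): if S ≥ S0 then P ≥ (S0² + 1)/2, and if S ≤ cS0 then P ≤ 1/(2 − cS0). -/

import Mathlib

/-!
Write `a = |s ∩ t|`, `u = |s ∪ t|`, so that `u + a = |s| + |t|`. The lower bound `S² ≤ R` says
`a u ≤ |s| |t|`: for a fixed sum, a product decreases as its factors move apart. For the upper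
bound, the Dice coefficient `D = 2 a / (|s| + |t|)` satisfies `(R + 1) / 2 = 1 / (2 - D)` exactly,
and `D ≤ S` is the inequality of arithmetic and geometric means.
-/

open Finset

section Similarity

variable {α : Type*} [DecidableEq α] {s t : Finset α}

lemma card_inter_mul_card_union_le (s t : Finset α) : #(s ∩ t) * #(s ∪ t) ≤ #s * #t := by
  obtain ⟨p, hp⟩ := Nat.exists_eq_add_of_le (card_le_card (inter_subset_left : s ∩ t ⊆ s))
  obtain ⟨q, hq⟩ := Nat.exists_eq_add_of_le (card_le_card (inter_subset_right : s ∩ t ⊆ t))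
  have hu : #(s ∪ t) = #(s ∩ t) + p + q := by
    have hcard := card_union_add_card_inter s t
    omega
  calc #(s ∩ t) * #(s ∪ t)
      ≤ #(s ∩ t) * #(s ∪ t) + p * q := Nat.le_add_right _ _
    _ = #s * #t := by rw [hu, hp, hq]; ring

/-- The cosine similarity `S` of two finite sets, i.e. the cosine of the angle between their
indicator vectors. It takes the junk value `0` when one of the sets is empty. -/
noncomputable def cosineSimilarity (s t : Finset α) : ℝ :=
  (#(s ∩ t) : ℝ) / √((#s : ℝ) * (#t : ℝ))

/-- The resemblance (Jaccard index) `R` of two finite sets, with the junk value `0` when both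
sets are empty. -/
noncomputable def resemblance (s t : Finset α) : ℝ :=
  (#(s ∩ t) : ℝ) / (#(s ∪ t) : ℝ)

/-- The Dice coefficient of two finite sets. It is the cosine similarity with the geometric mean of
the cardinalities replaced by their arithmetic mean, which makes it a function of the resemblance
alone. -/
noncomputable def diceCoefficient (s t : Finset α) : ℝ :=
  (#(s ∩ t) : ℝ) / (((#s : ℝ) + (#t : ℝ)) / 2)

/-- The collision probability `P` of 1-bit minwise hashing in the sparse limit, as a function of
the resemblance. -/
noncomputable def oneBitCollision (s t : Finset α) : ℝ :=
  (resemblance s t + 1) / 2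

lemma cosineSimilarity_le_one (s t : Finset α) : cosineSimilarity s t ≤ 1 := by
  refine div_le_one_of_le₀ (Real.le_sqrt_of_sq_le ?_) (Real.sqrt_nonneg _)
  rw [sq]
  gcongr
  exacts [inter_subset_left, inter_subset_right]

lemma cosineSimilarity_sq_le_resemblance (hs : s.Nonempty) (ht : t.Nonempty) :
    cosineSimilarity s t ^ 2 ≤ resemblance s t := by
  have hst : (0 : ℝ) < #s * #t := by exact_mod_cast Nat.mul_pos hs.card_pos ht.card_pos
  have hu : (0 : ℝ) < #(s ∪ t) := by exact_mod_cast (hs.mono subset_union_left).card_pos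
  have hmul : (#(s ∩ t) : ℝ) * #(s ∪ t) ≤ #s * #t := by
    exact_mod_cast card_inter_mul_card_union_le s t
  rw [cosineSimilarity, resemblance, div_pow, Real.sq_sqrt hst.le, div_le_div_iff₀ hst hu]
  calc (#(s ∩ t) : ℝ) ^ 2 * #(s ∪ t)
      = #(s ∩ t) * (#(s ∩ t) * #(s ∪ t)) := by ring
    _ ≤ #(s ∩ t) * (#s * #t) := by gcongr

lemma oneBitCollision_eq_one_div_two_sub_diceCoefficient (hst : (s ∪ t).Nonempty) :
    oneBitCollision s t = 1 / (2 - diceCoefficient s t) := by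
  have hu : (0 : ℝ) < #(s ∪ t) := by exact_mod_cast hst.card_pos
  have hne : (#(s ∩ t) : ℝ) + #(s ∪ t) ≠ 0 := by positivity
  have hcard : (#s : ℝ) + #t = #(s ∩ t) + #(s ∪ t) := by
    exact_mod_cast (card_inter_add_card_union s t).symm
  have hdice : 2 - diceCoefficient s t = #(s ∪ t) * 2 / (#(s ∩ t) + #(s ∪ t)) := by
    rw [diceCoefficient, hcard, eq_div_iff hne]
    field_simp
    ring
  rw [hdice, one_div_div, oneBitCollision, resemblance, div_add_one hu.ne', div_div]

lemma diceCoefficient_le_cosineSimilarity (hs : s.Nonempty) (ht : t.Nonempty) :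
    diceCoefficient s t ≤ cosineSimilarity s t := by
  have hst : (0 : ℝ) < #s * #t := by exact_mod_cast Nat.mul_pos hs.card_pos ht.card_pos
  have hamgm : √((#s : ℝ) * #t) ≤ ((#s : ℝ) + #t) / 2 :=
    Real.sqrt_le_iff.2 ⟨by positivity, by linarith [four_mul_le_sq_add (#s : ℝ) #t]⟩
  exact div_le_div_of_nonneg_left (Nat.cast_nonneg _) (Real.sqrt_pos.2 hst) hamgm

lemma oneBitCollision_le_of_cosineSimilarity_le (hs : s.Nonempty) (ht : t.Nonempty) {x : ℝ}
    (hx : x < 2) (h : cosineSimilarity s t ≤ x) : oneBitCollision s t ≤ 1 / (2 - x) := by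
  rw [oneBitCollision_eq_one_div_two_sub_diceCoefficient (hs.mono subset_union_left)]
  have hdice : diceCoefficient s t ≤ x := (diceCoefficient_le_cosineSimilarity hs ht).trans h
  exact one_div_le_one_div_of_le (by linarith) (by linarith)

lemma le_oneBitCollision_of_le_cosineSimilarity (hs : s.Nonempty) (ht : t.Nonempty) {x : ℝ}
    (hx : 0 ≤ x) (h : x ≤ cosineSimilarity s t) : (x ^ 2 + 1) / 2 ≤ oneBitCollision s t := by
  have hR : x ^ 2 ≤ resemblance s t :=
    (pow_le_pow_left₀ hx h 2).trans (cosineSimilarity_sq_le_resemblance hs ht)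
  unfold oneBitCollision
  gcongr

theorem one_bit_minhash_bounds_general (hs : s.Nonempty) (ht : t.Nonempty) {x y : ℝ}
    (hx : 0 ≤ x) (hy : y < 2) :
    (cosineSimilarity s t ^ 2 + 1) / 2 ≤ oneBitCollision s t ∧
      oneBitCollision s t ≤ 1 / (2 - cosineSimilarity s t) ∧
      (x ≤ cosineSimilarity s t → (x ^ 2 + 1) / 2 ≤ oneBitCollision s t) ∧
      (cosineSimilarity s t ≤ y → oneBitCollision s t ≤ 1 / (2 - y)) :=
  ⟨le_oneBitCollision_of_le_cosineSimilarity hs ht (by unfold cosineSimilarity; positivity) le_rfl,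
    oneBitCollision_le_of_cosineSimilarity_le hs ht
      ((cosineSimilarity_le_one s t).trans_lt one_lt_two) le_rfl,
    le_oneBitCollision_of_le_cosineSimilarity hs ht hx,
    oneBitCollision_le_of_cosineSimilarity_le hs ht hy⟩

end Similarity

/-- 1-bit MinHash bounds for cosine similarity: with `P = (R + 1)/2`, we have
`(S² + 1)/2 ≤ P ≤ 1/(2 - S)`; consequently `S ≥ S0` implies `P ≥ (S0² + 1)/2` and
`S ≤ c·S0` implies `P ≤ 1/(2 - c·S0)`. -/
theorem one_bit_minhash_bounds (W1 W2 : Finset ℕ) (h1 : W1.Nonempty) (h2 : W2.Nonempty)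
    (S0 c : ℝ) (hS0 : 0 < S0) (hS0' : S0 ≤ 1) (hc : 0 < c) (hc' : c < 1) :
    ((((W1 ∩ W2).card : ℝ) / Real.sqrt ((W1.card : ℝ) * (W2.card : ℝ))) ^ 2 + 1) / 2 ≤
        (((W1 ∩ W2).card : ℝ) / ((W1 ∪ W2).card : ℝ) + 1) / 2 ∧
      (((W1 ∩ W2).card : ℝ) / ((W1 ∪ W2).card : ℝ) + 1) / 2 ≤
        1 / (2 - ((W1 ∩ W2).card : ℝ) / Real.sqrt ((W1.card : ℝ) * (W2.card : ℝ))) ∧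
      (S0 ≤ ((W1 ∩ W2).card : ℝ) / Real.sqrt ((W1.card : ℝ) * (W2.card : ℝ)) →
        (S0 ^ 2 + 1) / 2 ≤ (((W1 ∩ W2).card : ℝ) / ((W1 ∪ W2).card : ℝ) + 1) / 2) ∧
      (((W1 ∩ W2).card : ℝ) / Real.sqrt ((W1.card : ℝ) * (W2.card : ℝ)) ≤ c * S0 →
        (((W1 ∩ W2).card : ℝ) / ((W1 ∪ W2).card : ℝ) + 1) / 2 ≤ 1 / (2 - c * S0)) := by
  have hcS0 : c * S0 < 2 := (mul_le_one₀ hc'.le hS0.le hS0').trans_lt one_lt_two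
  exact one_bit_minhash_bounds_general h1 h2 hS0.le hcS0
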